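/- arXiv:2201.03854 — 2 statements merged into one kernel-verified Lean document; each statement's English description precedes it below -/
import Mathlib

section
/- For the family 𝔤₄(λ, z₂, w₁, w₂) with λ ≠ 0, the structure J is almost Kähler, i.e. dω(E,F,G) = 0 for all E, F, G ∈ 𝔤, if and only if z₂ w₁ = 2λ². -/
noncomputable section

/-- The bilinear antisymmetric bracket on ℝ⁴ determined by the structure constants. -/
def bk (lam z₂ w₁ w₂ : ℝ) (E F : Fin 4 → ℝ) : Fin 4 → ℝ :=
  (E 0 * F 1 - E 1 * F 0) • (![z₂, 0, 0, z₂ * w₁ / lam] : Fin 4 → ℝ) +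
  (E 0 * F 2 - E 2 * F 0) • (![-lam, 0, 0, -w₁] : Fin 4 → ℝ) +
  (E 0 * F 3 - E 3 * F 0) • (![0, 0, 0, 0] : Fin 4 → ℝ) +
  (E 1 * F 2 - E 2 * F 1) • (![0, -lam, -z₂, -w₂] : Fin 4 → ℝ) +
  (E 1 * F 3 - E 3 * F 1) • (![0, 0, 0, z₂] : Fin 4 → ℝ) +
  (E 2 * F 3 - E 3 * F 2) • (![0, 0, 0, -lam] : Fin 4 → ℝ)

/-- The almost Hermitian structure J with J(X)=Y, J(Y)=-X, J(Z)=W, J(W)=-Z. -/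
def Jm (E : Fin 4 → ℝ) : Fin 4 → ℝ := ![-E 1, E 0, -E 3, E 2]

/-- The standard inner product, making {X,Y,Z,W} orthonormal. -/
def ip (E F : Fin 4 → ℝ) : ℝ := E 0 * F 0 + E 1 * F 1 + E 2 * F 2 + E 3 * F 3

/-- The Kähler form ω(E,F) = ⟨JE, F⟩. -/
def om (E F : Fin 4 → ℝ) : ℝ := ip (Jm E) F

/-- The left-invariant exterior derivative of the Kähler form. -/
def dom (lam z₂ w₁ w₂ : ℝ) (E F G : Fin 4 → ℝ) : ℝ :=
  -om (bk lam z₂ w₁ w₂ E F) G - om (bk lam z₂ w₁ w₂ F G) E - om (bk lam z₂ w₁ w₂ G E) F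

/-!
In the dual coframe `ω = e^X ∧ e^Y + e^Z ∧ e^W`, and every component of `dω` involving `W` cancels,
so `dω` is a multiple of `e^X ∧ e^Y ∧ e^Z`. Its coefficient is `dω(X, Y, Z) = z₂ w₁ / λ - 2 λ`: the
first term comes from the `W`-component of `[X, Y]`, and each of `[Y, Z]` and `[Z, X]`
contributes `-λ`.
-/

/-- The basis 3-form `e^X ∧ e^Y ∧ e^Z` on `𝔤`, encoded as the determinant of the first three
coordinates; `dω` is a multiple of it. -/
def wedgeXYZ (E F G : Fin 4 → ℝ) : ℝ :=
  !![E 0, E 1, E 2; F 0, F 1, F 2; G 0, G 1, G 2].det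

theorem wedgeXYZ_basis : wedgeXYZ ![1, 0, 0, 0] ![0, 1, 0, 0] ![0, 0, 1, 0] = 1 := by
  simp [wedgeXYZ, Matrix.det_fin_three]

theorem om_apply (E F : Fin 4 → ℝ) :
    om E F = (E 0 * F 1 - E 1 * F 0) + (E 2 * F 3 - E 3 * F 2) := by
  simp only [om, ip, Jm, Matrix.cons_val]
  ring

theorem bk_eq_vecCons (lam z₂ w₁ w₂ : ℝ) (E F : Fin 4 → ℝ) :
    bk lam z₂ w₁ w₂ E F =
      ![z₂ * (E 0 * F 1 - E 1 * F 0) - lam * (E 0 * F 2 - E 2 * F 0),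
        -lam * (E 1 * F 2 - E 2 * F 1),
        -z₂ * (E 1 * F 2 - E 2 * F 1),
        z₂ * w₁ / lam * (E 0 * F 1 - E 1 * F 0) - w₁ * (E 0 * F 2 - E 2 * F 0)
          - w₂ * (E 1 * F 2 - E 2 * F 1) + z₂ * (E 1 * F 3 - E 3 * F 1)
          - lam * (E 2 * F 3 - E 3 * F 2)] := by
  ext i
  fin_cases i <;>
    simp only [bk, Pi.add_apply, Pi.smul_apply, smul_eq_mul, Fin.zero_eta, Fin.mk_one,
      Fin.reduceFinMk, Matrix.cons_val] <;>
    ring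

theorem dom_eq_mul_wedgeXYZ (lam z₂ w₁ w₂ : ℝ) (E F G : Fin 4 → ℝ) :
    dom lam z₂ w₁ w₂ E F G = (z₂ * w₁ / lam - 2 * lam) * wedgeXYZ E F G := by
  simp only [dom, om_apply, bk_eq_vecCons, wedgeXYZ, Matrix.det_fin_three, Matrix.of_apply,
    Matrix.cons_val]
  ring

theorem forall_dom_eq_zero_iff (lam z₂ w₁ w₂ : ℝ) :
    (∀ E F G : Fin 4 → ℝ, dom lam z₂ w₁ w₂ E F G = 0) ↔ z₂ * w₁ / lam - 2 * lam = 0 := by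
  simp only [dom_eq_mul_wedgeXYZ]
  constructor
  · intro closed
    simpa only [wedgeXYZ_basis, mul_one] using
      closed ![1, 0, 0, 0] ![0, 1, 0, 0] ![0, 0, 1, 0]
  · intro coeff_eq_zero E F G
    rw [coeff_eq_zero, zero_mul]

theorem g4_almostKaehler_iff (lam z₂ w₁ w₂ : ℝ) (hlam : lam ≠ 0) :
    (∀ E F G : Fin 4 → ℝ, dom lam z₂ w₁ w₂ E F G = 0) ↔ z₂ * w₁ = 2 * lam ^ 2 := by
  rw [forall_dom_eq_zero_iff, sub_eq_zero, div_eq_iff hlam, mul_assoc, ← sq]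

end
end

section
/- For the family 𝔤₄(λ, z₂, w₁, w₂) with λ ≠ 0, the structure J is integrable, i.e. the Nijenhuis tensor N(E,F) = 0 for all E, F ∈ 𝔤, if and only if 2z₂ + w₁ = 0 and w₂ = 0. -/
noncomputable section

/-- The Nijenhuis tensor of J. -/
def NT (lam z₂ w₁ w₂ : ℝ) (E F : Fin 4 → ℝ) : Fin 4 → ℝ :=
  bk lam z₂ w₁ w₂ E F + Jm (bk lam z₂ w₁ w₂ (Jm E) F) + Jm (bk lam z₂ w₁ w₂ E (Jm F)) -
    bk lam z₂ w₁ w₂ (Jm E) (Jm F)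

/-!
The Nijenhuis tensor `N` of an almost complex structure `J` is alternating and `J`-antilinear in
each argument. Hence, when `X`, `JX`, `Z`, `JZ` span the space, `N` is determined by the single
value `N(X, Z)`, and on `𝔤₄` this value is `w₂ Z - (2 z₂ + w₁) W`.
-/

section Nijenhuis

variable {R V : Type*} [CommRing R] [AddCommGroup V] [Module R V]

/-- The Nijenhuis tensor of an endomorphism `J` with respect to a bilinear bracket `B`, as a
bilinear map. Neither antisymmetry nor the Jacobi identity for `B`, nor `J² = -1`, is built in. -/
def nijenhuis (B : V →ₗ[R] V →ₗ[R] V) (J : V →ₗ[R] V) : V →ₗ[R] V →ₗ[R] V :=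
  B + (B.comp J).compr₂ J + (B.compl₂ J).compr₂ J - B.compl₁₂ J J

variable {B : V →ₗ[R] V →ₗ[R] V} {J : V →ₗ[R] V}

theorem nijenhuis_apply (B : V →ₗ[R] V →ₗ[R] V) (J : V →ₗ[R] V) (x y : V) :
    nijenhuis B J x y = B x y + J (B (J x) y) + J (B x (J y)) - B (J x) (J y) := rfl

theorem isAlt_nijenhuis (hB : B.IsAlt) (J : V →ₗ[R] V) : (nijenhuis B J).IsAlt := fun x ↦ by
  rw [nijenhuis_apply, hB.self_eq_zero, hB.self_eq_zero, ← hB.neg x (J x), map_neg]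
  abel

theorem nijenhuis_map_left (B : V →ₗ[R] V →ₗ[R] V) (hJ : ∀ x, J (J x) = -x) (x y : V) :
    nijenhuis B J (J x) y = -J (nijenhuis B J x y) := by
  simp only [nijenhuis_apply, hJ, map_add, map_sub, map_neg, LinearMap.neg_apply]
  abel

theorem nijenhuis_map_right (B : V →ₗ[R] V →ₗ[R] V) (hJ : ∀ x, J (J x) = -x) (x y : V) :
    nijenhuis B J x (J y) = -J (nijenhuis B J x y) := by
  simp only [nijenhuis_apply, hJ, map_add, map_sub, map_neg]
  abel

theorem nijenhuis_eq_zero_iff_of_span (hJ : ∀ x, J (J x) = -x) {s : Set V}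
    (hs : Submodule.span R (s ∪ J '' s) = ⊤) :
    nijenhuis B J = 0 ↔ ∀ x ∈ s, ∀ y ∈ s, nijenhuis B J x y = 0 := by
  refine ⟨fun h x _ y _ ↦ by simp [h], fun h ↦ ?_⟩
  have eq_zero_of_mem (x : V) (hx : x ∈ s) : nijenhuis B J x = 0 := by
    refine LinearMap.ext_on hs ?_
    rintro _ (hy | ⟨y, hy, rfl⟩)
    · exact h x hx _ hy
    · simp [nijenhuis_map_right B hJ, h x hx y hy]
  refine LinearMap.ext_on hs ?_
  rintro _ (hx | ⟨x, hx, rfl⟩)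
  · exact eq_zero_of_mem _ hx
  · ext y
    simp [nijenhuis_map_left B hJ, eq_zero_of_mem x hx]

theorem nijenhuis_eq_zero_iff_of_span_pair (hB : B.IsAlt) (hJ : ∀ x, J (J x) = -x) {x y : V}
    (hxy : Submodule.span R ({x, y} ∪ J '' {x, y}) = ⊤) :
    nijenhuis B J = 0 ↔ nijenhuis B J x y = 0 := by
  have hN := isAlt_nijenhuis hB J
  rw [nijenhuis_eq_zero_iff_of_span hJ hxy]
  simp [hN.self_eq_zero, ← hN.neg x y]

end Nijenhuis

section G4

/-- The bracket `bk` of `𝔤₄(λ, z₂, w₁, w₂)` as a bilinear map. -/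
def bkLinear (lam z₂ w₁ w₂ : ℝ) : (Fin 4 → ℝ) →ₗ[ℝ] (Fin 4 → ℝ) →ₗ[ℝ] (Fin 4 → ℝ) :=
  LinearMap.mk₂ ℝ (bk lam z₂ w₁ w₂)
    (fun E E' F ↦ by simp only [bk, Pi.add_apply]; module)
    (fun c E F ↦ by simp only [bk, Pi.smul_apply, smul_eq_mul]; module)
    (fun E F F' ↦ by simp only [bk, Pi.add_apply]; module)
    (fun c E F ↦ by simp only [bk, Pi.smul_apply, smul_eq_mul]; module)

/-- The almost complex structure `Jm` as a linear map. -/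
def JmLinear : (Fin 4 → ℝ) →ₗ[ℝ] (Fin 4 → ℝ) where
  toFun := Jm
  map_add' E F := by ext i; fin_cases i <;> simp [Jm] <;> ring
  map_smul' c E := by ext i; fin_cases i <;> simp [Jm]

theorem nijenhuis_bkLinear_JmLinear (lam z₂ w₁ w₂ : ℝ) (E F : Fin 4 → ℝ) :
    nijenhuis (bkLinear lam z₂ w₁ w₂) JmLinear E F = NT lam z₂ w₁ w₂ E F := rfl

theorem isAlt_bkLinear (lam z₂ w₁ w₂ : ℝ) : (bkLinear lam z₂ w₁ w₂).IsAlt := fun E ↦ by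
  simp only [bkLinear, LinearMap.mk₂_apply, bk]
  module

theorem JmLinear_JmLinear (E : Fin 4 → ℝ) : JmLinear (JmLinear E) = -E := by
  ext i
  fin_cases i <;> rfl

theorem JmLinear_vec (a b c d : ℝ) : JmLinear ![a, b, c, d] = ![-b, a, -d, c] := rfl

theorem span_X_Z_union_image_JmLinear :
    Submodule.span ℝ
      ({![1, 0, 0, 0], ![0, 0, 1, 0]} ∪ JmLinear '' {![1, 0, 0, 0], ![0, 0, 1, 0]}) = ⊤ := by
  simp only [Set.image_pair, JmLinear_vec, neg_zero]
  rw [← top_le_iff, ← (Pi.basisFun ℝ (Fin 4)).span_eq]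
  refine Submodule.span_mono ?_
  rintro _ ⟨i, rfl⟩
  fin_cases i <;> simp [funext_iff, Fin.forall_fin_succ]

theorem NT_X_Z (lam z₂ w₁ w₂ : ℝ) :
    NT lam z₂ w₁ w₂ ![1, 0, 0, 0] ![0, 0, 1, 0] = ![0, 0, w₂, -(2 * z₂ + w₁)] := by
  have bk_X_Z : bk lam z₂ w₁ w₂ ![1, 0, 0, 0] ![0, 0, 1, 0] = ![-lam, 0, 0, -w₁] := by simp [bk]
  have bk_Y_Z : bk lam z₂ w₁ w₂ ![0, 1, 0, 0] ![0, 0, 1, 0] = ![0, -lam, -z₂, -w₂] := by simp [bk]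
  have bk_X_W : bk lam z₂ w₁ w₂ ![1, 0, 0, 0] ![0, 0, 0, 1] = 0 := by simp [bk]
  have bk_Y_W : bk lam z₂ w₁ w₂ ![0, 1, 0, 0] ![0, 0, 0, 1] = ![0, 0, 0, z₂] := by simp [bk]
  have W_coord : -w₁ + -z₂ - z₂ = -(2 * z₂ + w₁) := by ring
  simp only [← nijenhuis_bkLinear_JmLinear, nijenhuis_apply, JmLinear_vec, neg_zero, bkLinear,
    LinearMap.mk₂_apply, bk_X_Z, bk_Y_Z, bk_X_W, bk_Y_W, map_zero]
  simp [-neg_add_rev, W_coord]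

end G4

theorem g4_integrable_iff (lam z₂ w₁ w₂ : ℝ) (hlam : lam ≠ 0) :
    (∀ E F : Fin 4 → ℝ, NT lam z₂ w₁ w₂ E F = 0) ↔ (2 * z₂ + w₁ = 0 ∧ w₂ = 0) := by
  calc (∀ E F : Fin 4 → ℝ, NT lam z₂ w₁ w₂ E F = 0)
      ↔ nijenhuis (bkLinear lam z₂ w₁ w₂) JmLinear = 0 := by
        simp only [LinearMap.ext_iff₂, nijenhuis_bkLinear_JmLinear, LinearMap.zero_apply]
    _ ↔ NT lam z₂ w₁ w₂ ![1, 0, 0, 0] ![0, 0, 1, 0] = 0 :=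
      nijenhuis_eq_zero_iff_of_span_pair (isAlt_bkLinear lam z₂ w₁ w₂) JmLinear_JmLinear
        span_X_Z_union_image_JmLinear
    _ ↔ 2 * z₂ + w₁ = 0 ∧ w₂ = 0 := by
      rw [NT_X_Z]
      simp [-neg_add_rev, and_comm]

end
end
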